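/- arXiv:1308.2808 — 2 statements merged into one kernel-verified Lean document; each statement's English description precedes it below -/
import Mathlib

section
/- Let g(x) = (1/2) e^{−|x|} and let α > 0. Then for all x ∈ [0, α) and ξ ∈ [0, 1/α), the Zak transform satisfies Z_α g(x, ξ) = e^{−x} / (2(1 − e^{−α(1 + 2πi ξ)})) − e^{x} / (2(1 − e^{α(1 − 2πi ξ)})), and Z_α g(x, ξ) = 0 for (x, ξ) ∈ [0, α) × [0, 1/α) if and only if x = α/2 and ξ = 1/(2α). -/
/-!
Put `r = exp (-α + 2πiαξ)` and `q = exp (-α - 2πiαξ)`, both of modulus `e^{-α} < 1`. For `x ∈ [0, α)`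
the sign of `x - αk` is constant on `k ≥ 1` and on `k ≤ 0`, so the Zak series splits into the two
geometric series `(e^x / 2) ∑_{k ≥ 1} r ^ k` and `(e^{-x} / 2) ∑_{k ≥ 0} q ^ k` (`zak_hasSum`).

Clearing denominators and using `r q = e^{-2α}`, the sum vanishes iff
`e^{-x} (1 - r) + e^x (r - e^{-2α}) = 0`. With `θ = 2παξ ∈ [0, 2π)`, the imaginary part forces `x = 0`
or `sin θ = 0`; the real part excludes `x = 0` and `θ = 0`, and for `θ = π` it reads
`e^{-x} = e^{x - α}`, i.e. `x = α / 2` (`zero_iff`).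
-/

open MeasureTheory Complex

/-- The Zak transform `Z_α g (x, ξ) = ∑_{k ∈ ℤ} g(x - αk) e^{2πiαkξ}`. -/
noncomputable def zak (α : ℝ) (g : ℝ → ℂ) (x ξ : ℝ) : ℂ :=
  ∑' k : ℤ, g (x - α * k) *
    Complex.exp (2 * (Real.pi : ℂ) * Complex.I * (α : ℂ) * (k : ℂ) * (ξ : ℂ))

/-- The Zak series of `e^{-|x|} / 2` converges to the sum of its two one-sided geometric series. -/
lemma zak_hasSum (g : ℝ → ℂ) (hg : ∀ x : ℝ, g x = ((1 / 2 : ℝ) * Real.exp (-|x|) : ℝ))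
    (α : ℝ) (hα : 0 < α) (x : ℝ) (hx : x ∈ Set.Ico (0 : ℝ) α) (ξ : ℝ) (r q : ℂ)
    (hr : r = exp (-α + 2 * Real.pi * I * α * ξ)) (hq : q = exp (-α - 2 * Real.pi * I * α * ξ))
    (hr1 : ‖r‖ < 1) (hq1 : ‖q‖ < 1) :
    HasSum (fun k : ℤ => g (x - α * k) * exp (2 * (Real.pi : ℂ) * I * (α : ℂ) * (k : ℂ) * (ξ : ℂ)))
      (exp x / 2 * r * (1 - r)⁻¹ + exp (-x) / 2 + exp (-x) / 2 * q * (1 - q)⁻¹) := by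
  have h0 : exp (-(x : ℂ)) / 2 = (fun k : ℤ => g (x - α * k) *
      exp (2 * (Real.pi : ℂ) * I * (α : ℂ) * (k : ℂ) * (ξ : ℂ))) 0 := by
    simp [hg, abs_of_nonneg hx.1]
    ring
  nth_rewrite 1 [h0]
  refine HasSum.of_add_one_of_neg_add_one ?_ ?_
  · refine HasSum.congr_fun ((hasSum_geometric_of_norm_lt_one hr1).mul_left (exp x / 2 * r))
      fun n => ?_
    have habs : |x - α * ((n + 1 : ℤ) : ℝ)| = α * (n + 1) - x := by
      push_cast
      rw [abs_of_nonpos (by nlinarith [hx.2, mul_nonneg hα.le n.cast_nonneg])]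
      ring
    rw [hg, habs, mul_assoc (exp (x : ℂ) / 2), ← pow_succ', hr, ← exp_nat_mul]
    push_cast
    rw [mul_assoc, ← exp_add, div_mul_eq_mul_div, div_mul_eq_mul_div, ← exp_add, one_mul]
    ring_nf
  · refine HasSum.congr_fun ((hasSum_geometric_of_norm_lt_one hq1).mul_left (exp (-x) / 2 * q))
      fun n => ?_
    have habs : |x - α * ((-(n + 1 : ℤ) : ℤ) : ℝ)| = α * (n + 1) + x := by
      push_cast
      rw [abs_of_nonneg (by nlinarith [hx.1, mul_nonneg hα.le n.cast_nonneg])]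
      ring
    rw [hg, habs, mul_assoc (exp (-(x : ℂ)) / 2), ← pow_succ', hq, ← exp_nat_mul]
    push_cast
    rw [mul_assoc, ← exp_add, div_mul_eq_mul_div, div_mul_eq_mul_div, ← exp_add, one_mul]
    ring_nf

/-- The zeros of the numerator of the closed form, in real coordinates: the two equations on
the left are its real and imaginary parts, with `θ = 2παξ`. -/
lemma zero_iff (α : ℝ) (hα : 0 < α) (x : ℝ) (hx : x ∈ Set.Ico (0 : ℝ) α) (θ : ℝ)
    (hθ : θ ∈ Set.Ico 0 (2 * Real.pi)) :
    (Real.exp (-x) * (1 - Real.exp (-α) * Real.cos θ) +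
        Real.exp x * (Real.exp (-α) * Real.cos θ - Real.exp (-α) ^ 2) = 0 ∧
      (Real.exp x - Real.exp (-x)) * (Real.exp (-α) * Real.sin θ) = 0) ↔
      x = α / 2 ∧ θ = Real.pi := by
  have hc : 0 < Real.exp (-α) := Real.exp_pos _
  have hc1 : Real.exp (-α) < 1 := Real.exp_lt_one_iff.mpr (by linarith)
  constructor
  · rintro ⟨h1, h2⟩
    rcases mul_eq_zero.1 h2 with h | h
    · have hx0 : x = 0 := by
        have := Real.exp_injective (sub_eq_zero.1 h)
        linarith
      subst hx0
      simp only [neg_zero, Real.exp_zero] at h1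
      nlinarith
    · have hs : Real.sin θ = 0 := (mul_eq_zero.1 h).resolve_left hc.ne'
      have hcases : θ = 0 ∨ θ = Real.pi := by
        rcases lt_trichotomy θ Real.pi with hlt | heq | hgt
        · exact Or.inl ((Real.sin_eq_zero_iff_of_lt_of_lt (by linarith [Real.pi_pos, hθ.1]) hlt).1 hs)
        · exact Or.inr heq
        · have h3 : Real.sin (θ - Real.pi) = 0 := by rw [Real.sin_sub_pi, hs, neg_zero]
          have := (Real.sin_eq_zero_iff_of_lt_of_lt (by linarith [Real.pi_pos])
            (by linarith [hθ.2])).1 h3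
          linarith
      rcases hcases with rfl | rfl
      · rw [Real.cos_zero] at h1
        have e1 := mul_pos (Real.exp_pos (-x)) (sub_pos.2 hc1)
        have e2 := mul_pos (mul_pos (Real.exp_pos x) hc) (sub_pos.2 hc1)
        nlinarith
      · rw [Real.cos_pi] at h1
        have h3 : (1 + Real.exp (-α)) * (Real.exp (-x) - Real.exp x * Real.exp (-α)) = 0 := by
          linarith
        have h4 := (mul_eq_zero.1 h3).resolve_left (by linarith)
        rw [← Real.exp_add] at h4
        have := Real.exp_injective (sub_eq_zero.1 h4)
        exact ⟨by linarith, rfl⟩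
  · rintro ⟨rfl, rfl⟩
    rw [Real.cos_pi, Real.sin_pi]
    have : Real.exp (-(α / 2)) = Real.exp (α / 2) * Real.exp (-α) := by
      rw [← Real.exp_add]; ring_nf
    rw [this]
    constructor <;> ring

theorem stmt14 (g : ℝ → ℂ) (hg : ∀ x : ℝ, g x = ((1 / 2 : ℝ) * Real.exp (-|x|) : ℝ))
    (α : ℝ) (hα : 0 < α) :
    ∀ x ∈ Set.Ico (0 : ℝ) α, ∀ ξ ∈ Set.Ico (0 : ℝ) (1 / α),
      (Summable (fun k : ℤ => g (x - α * k) *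
          Complex.exp (2 * (Real.pi : ℂ) * Complex.I * (α : ℂ) * (k : ℂ) * (ξ : ℂ))) ∧
        zak α g x ξ =
          Complex.exp (-(x : ℂ)) /
              (2 * (1 - Complex.exp (-(α : ℂ) * (1 + 2 * (Real.pi : ℂ) * Complex.I * (ξ : ℂ))))) -
            Complex.exp ((x : ℂ)) /
              (2 * (1 - Complex.exp ((α : ℂ) * (1 - 2 * (Real.pi : ℂ) * Complex.I * (ξ : ℂ)))))) ∧
      (zak α g x ξ = 0 ↔ x = α / 2 ∧ ξ = 1 / (2 * α)) := by
  intro x hx ξ hξ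
  obtain ⟨r, hr⟩ : ∃ r : ℂ, r = exp (-α + 2 * Real.pi * I * α * ξ) := ⟨_, rfl⟩
  obtain ⟨q, hq⟩ : ∃ q : ℂ, q = exp (-α - 2 * Real.pi * I * α * ξ) := ⟨_, rfl⟩
  have hr1 : ‖r‖ < 1 := by
    rw [hr, norm_exp]
    simpa using hα
  have hq1 : ‖q‖ < 1 := by
    rw [hq, norm_exp]
    simpa using hα
  have hS := zak_hasSum g hg α hα x hx ξ r q hr hq hr1 hq1
  have hr0 : r ≠ 0 := hr ▸ exp_ne_zero _
  have hr2 : 1 - r ≠ 0 := fun h => by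
    rw [← sub_eq_zero.1 h, norm_one] at hr1
    exact lt_irrefl _ hr1
  have hq2 : 1 - q ≠ 0 := fun h => by
    rw [← sub_eq_zero.1 h, norm_one] at hq1
    exact lt_irrefl _ hq1
  have hZ : zak α g x ξ =
      exp x / 2 * r * (1 - r)⁻¹ + exp (-x) / 2 + exp (-x) / 2 * q * (1 - q)⁻¹ := hS.tsum_eq
  have hqe : exp (-(α : ℂ) * (1 + 2 * (Real.pi : ℂ) * I * (ξ : ℂ))) = q := by
    rw [hq]; ring_nf
  have hre : exp ((α : ℂ) * (1 - 2 * (Real.pi : ℂ) * I * (ξ : ℂ))) = r⁻¹ := by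
    rw [hr, ← exp_neg]; ring_nf
  refine ⟨⟨hS.summable, ?_⟩, ?_⟩
  · rw [hZ, hqe, hre]
    have hr3 : 1 - r⁻¹ = -(1 - r) / r := by field_simp; ring
    rw [hr3]
    field_simp
    ring
  · have hrq : r * q = ((Real.exp (-α) ^ 2 : ℝ) : ℂ) := by
      rw [hr, hq, ← exp_add]
      push_cast
      rw [← exp_nat_mul]
      push_cast
      ring_nf
    have hnum : zak α g x ξ = (exp (-x) * (1 - r) + exp x * (r - r * q)) /
        (2 * (1 - r) * (1 - q)) := by
      rw [hZ]; field_simp; ring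
    have hrθ : r = ((Real.exp (-α) * Real.cos (2 * Real.pi * α * ξ) : ℝ) : ℂ) +
        ((Real.exp (-α) * Real.sin (2 * Real.pi * α * ξ) : ℝ) : ℂ) * I := by
      have : (2 * Real.pi * I * α * ξ : ℂ) = ((2 * Real.pi * α * ξ : ℝ) : ℂ) * I := by
        push_cast; ring
      rw [hr, this, exp_add, exp_mul_I]
      push_cast
      ring
    have hθ : 2 * Real.pi * α * ξ ∈ Set.Ico 0 (2 * Real.pi) := by
      have h1 : ξ * α < 1 := (lt_div_iff₀ hα).1 hξ.2
      have hp := Real.pi_pos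
      refine ⟨mul_nonneg (by positivity) hξ.1, ?_⟩
      nlinarith
    have hsplit : exp (-x) * (1 - r) + exp x * (r - r * q) =
        ((Real.exp (-x) * (1 - Real.exp (-α) * Real.cos (2 * Real.pi * α * ξ)) +
          Real.exp x * (Real.exp (-α) * Real.cos (2 * Real.pi * α * ξ) -
            Real.exp (-α) ^ 2) : ℝ) : ℂ) +
        (((Real.exp x - Real.exp (-x)) *
          (Real.exp (-α) * Real.sin (2 * Real.pi * α * ξ)) : ℝ) : ℂ) * I := by
      rw [hrq, hrθ]
      push_cast
      ring
    have hξ' : 2 * Real.pi * α * ξ = Real.pi ↔ ξ = 1 / (2 * α) := by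
      have hp := Real.pi_ne_zero
      rw [eq_div_iff (by positivity)]
      constructor
      · intro h
        apply mul_left_cancel₀ hp
        linarith
      · intro h
        linear_combination Real.pi * h
    rw [← hξ', ← zero_iff α hα x hx _ hθ, hnum,
      div_eq_zero_iff, or_iff_left (by simp [hr2, hq2]), hsplit]
    constructor
    · intro h
      exact ⟨by simpa only [re_add_im, add_re, re_ofReal_mul, I_re, mul_zero, add_zero, ofReal_re,
          zero_re] using congrArg re h,
        by simpa only [add_im, im_ofReal_mul, I_im, mul_one, zero_add, ofReal_im,
          zero_im] using congrArg im h⟩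
    · rintro ⟨h1, h2⟩
      rw [h1, h2]
      simp
end

section
/- Let g ∈ L¹(ℝ) be a totally positive function of finite type m ≥ 1. Then g has exponential decay: there exist constants C, a > 0 such that |g(x)| ≤ C e^{−a|x|} for almost every x ∈ ℝ. Moreover, if m ≥ 2, then g has a continuous representative: there is a continuous function on ℝ equal to g almost everywhere. -/
open MeasureTheory Complex FourierTransform

/-!
The transform of `g` is a product of the factors `(1 + 2πiδξ)⁻¹`, and each factor is the transform
of the one-sided exponential `|δ|⁻¹ e^{-x/δ} 1_{x/δ > 0}` (`exists_kernel`). Convolution preserves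
exponential decay (`norm_convolution_le`), so an `m`-fold convolution of such kernels is an
integrable, exponentially decaying function with the same transform as `g`
(`exists_decaying_of_product`).

Injectivity of the Fourier transform on `L¹` then identifies this convolution with `g` almost
everywhere. It follows from an almost-everywhere inversion formula (`ae_eq_fourierInv_fourier`):
if `g` and its transform are integrable, then `g = 𝓕⁻ (𝓕 g)` a.e., which is seen by testing both
sides against smooth compactly supported functions and moving transforms across the integral.

For `m ≥ 2` the product is dominated by a sum of functions `(1 + (2πδξ)²)⁻¹`, hence integrable, so
the same inversion formula exhibits the continuous function `𝓕⁻ (𝓕 g)` as a representative of `g`.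
-/

/-- The Fourier transform can be moved across the integral of a product of two `L¹` functions. -/
lemma integral_fourier_mul_eq_of_integrable {f g : ℝ → ℂ} (hf : Integrable f)
    (hg : Integrable g) : ∫ ξ, 𝓕 f ξ * g ξ = ∫ x, f x * 𝓕 g x := by
  simpa using! VectorFourier.integral_bilin_fourierIntegral_eq_flip (ContinuousLinearMap.mul ℂ ℂ)
    (L := innerₗ ℝ) Real.continuous_fourierChar continuous_inner hf hg

lemma continuous_fourierInv_of_integrable {f : ℝ → ℂ} (hf : Integrable f) :
    Continuous (𝓕⁻ f) := by
  rw [Real.fourierInv_eq_fourier_comp_neg]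
  exact VectorFourier.fourierIntegral_continuous Real.continuous_fourierChar
    (innerSL ℝ).continuous₂ hf.comp_neg

/-- Fourier inversion almost everywhere, without continuity of `g`. -/
lemma ae_eq_fourierInv_fourier {g : ℝ → ℂ} (hg : Integrable g) (hg' : Integrable (𝓕 g)) :
    ∀ᵐ x, g x = 𝓕⁻ (𝓕 g) x := by
  refine ae_eq_of_integral_contDiff_smul_eq hg.locallyIntegrable
    (continuous_fourierInv_of_integrable hg').locallyIntegrable fun ψ hψ hψc ↦ ?_
  have hc : HasCompactSupport (fun x ↦ (ψ x : ℂ)) := hψc.comp_left (g := Complex.ofReal) (by simp)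
  let Ψ : SchwartzMap ℝ ℂ := hc.toSchwartzMap (Complex.ofRealCLM.contDiff.comp hψ)
  have hΨ : ∀ x, Ψ x = (ψ x : ℂ) := fun x ↦ rfl
  symm
  calc ∫ x, ψ x • 𝓕⁻ (𝓕 g) x
      = ∫ x, 𝓕 (fun y ↦ 𝓕 g (-y)) x * Ψ x := by
        rw [Real.fourierInv_eq_fourier_comp_neg]
        simp [hΨ, mul_comm]
    _ = ∫ x, 𝓕 g (-x) * 𝓕 (Ψ : ℝ → ℂ) x :=
        integral_fourier_mul_eq_of_integrable hg'.comp_neg Ψ.integrable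
    _ = ∫ x, 𝓕 g x * 𝓕 (Ψ : ℝ → ℂ) (-x) := by
        rw [← integral_neg_eq_self (fun x ↦ 𝓕 g x * 𝓕 (Ψ : ℝ → ℂ) (-x))]
        simp
    _ = ∫ x, 𝓕 g x * (𝓕⁻ Ψ) x := by
        simp_rw [SchwartzMap.fourierInv_coe, Real.fourierInv_eq_fourier_neg]
    _ = ∫ x, g x * 𝓕 (𝓕⁻ Ψ : SchwartzMap ℝ ℂ) x := by
        rw [SchwartzMap.fourier_coe]
        exact integral_fourier_mul_eq_of_integrable hg (𝓕⁻ Ψ : SchwartzMap ℝ ℂ).integrable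
    _ = ∫ x, ψ x • g x := by
        rw [FourierTransform.fourier_fourierInv_eq]
        simp [hΨ, mul_comm]

/-- Injectivity of the Fourier transform on `L¹`. -/
lemma ae_eq_of_fourier_eq {f g : ℝ → ℂ} (hf : Integrable f) (hg : Integrable g)
    (h : ∀ ξ, 𝓕 f ξ = 𝓕 g ξ) : ∀ᵐ x, f x = g x := by
  have h0 : 𝓕 (f - g) = 0 := by
    ext ξ
    have : 𝓕 (f - g) ξ = 𝓕 f ξ - 𝓕 g ξ := by
      simp only [Real.fourier_real_eq, Pi.sub_apply, smul_sub]
      exact integral_sub ((Real.fourierIntegral_convergent_iff ξ).2 hf |>.congr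
        (by simp [mul_comm])) ((Real.fourierIntegral_convergent_iff ξ).2 hg |>.congr
        (by simp [mul_comm]))
    rw [this, h, sub_self, Pi.zero_apply]
  have := ae_eq_fourierInv_fourier (hf.sub hg) (by rw [h0]; exact integrable_zero _ _ _)
  filter_upwards [this] with x hx
  rw [h0, Real.fourierInv_eq] at hx
  simpa [sub_eq_zero] using hx

lemma integrable_exp_neg_mul_abs {a : ℝ} (ha : 0 < a) :
    Integrable fun x : ℝ ↦ Real.exp (-a * |x|) := by
  rw [← integrableOn_univ, ← Set.Iic_union_Ioi (a := (0 : ℝ))]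
  refine IntegrableOn.union ?_ ?_
  · refine (integrableOn_exp_mul_Iic ha 0).congr_fun (fun x hx ↦ ?_) measurableSet_Iic
    simp [abs_of_nonpos (Set.mem_Iic.1 hx)]
  · refine (integrableOn_exp_mul_Ioi (a := -a) (by linarith) 0).congr_fun (fun x hx ↦ ?_)
      measurableSet_Ioi
    simp [abs_of_pos (Set.mem_Ioi.1 hx)]

lemma exists_kernel_of_pos {δ : ℝ} (hδ : 0 < δ) : ∃ k : ℝ → ℂ, Integrable k ∧
    (∃ C a : ℝ, 0 < C ∧ 0 < a ∧ ∀ x, ‖k x‖ ≤ C * Real.exp (-a * |x|)) ∧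
    ∀ ξ : ℝ, 𝓕 k ξ = (1 + 2 * (Real.pi : ℂ) * Complex.I * (δ : ℂ) * (ξ : ℂ))⁻¹ := by
  have hδ' : (δ : ℂ) ≠ 0 := by exact_mod_cast hδ.ne'
  have hre : ∀ ξ : ℝ, (-((δ⁻¹ : ℝ) : ℂ) - 2 * Real.pi * ξ * I).re < 0 := by
    intro ξ
    simp [hδ]
  refine ⟨(Set.Ioi 0).indicator fun x : ℝ ↦ (δ⁻¹ : ℂ) * cexp (-((δ⁻¹ : ℝ) : ℂ) * x), ?_,
    ⟨δ⁻¹, δ⁻¹, by positivity, by positivity, fun x ↦ ?_⟩, fun ξ ↦ ?_⟩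
  · refine IntegrableOn.integrable_indicator ?_ measurableSet_Ioi
    refine Integrable.const_mul ?_ _
    exact integrableOn_exp_mul_complex_Ioi (by simpa using hδ) 0
  · by_cases hx : x ∈ Set.Ioi (0 : ℝ)
    · rw [Set.indicator_of_mem hx, norm_mul, Complex.norm_exp, abs_of_pos (Set.mem_Ioi.1 hx)]
      simp [abs_of_pos hδ, -ofReal_inv]
    · rw [Set.indicator_of_notMem hx, norm_zero]
      positivity
  · rw [Real.fourier_real_eq_integral_exp_smul]
    have : ∀ v : ℝ, cexp (↑(-2 * Real.pi * v * ξ) * I) • (Set.Ioi 0).indicator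
        (fun x : ℝ ↦ (δ⁻¹ : ℂ) * cexp (-((δ⁻¹ : ℝ) : ℂ) * x)) v = (Set.Ioi 0).indicator
        (fun v : ℝ ↦ (δ⁻¹ : ℂ) * cexp ((-((δ⁻¹ : ℝ) : ℂ) - 2 * Real.pi * ξ * I) * v)) v := by
      intro v
      by_cases hv : v ∈ Set.Ioi (0 : ℝ)
      · rw [Set.indicator_of_mem hv, Set.indicator_of_mem hv, smul_eq_mul, mul_left_comm,
          ← Complex.exp_add]
        congr 2
        push_cast
        ring
      · simp [Set.indicator_of_notMem hv]
    simp_rw [this]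
    rw [integral_indicator measurableSet_Ioi, integral_const_mul,
      integral_exp_mul_complex_Ioi (hre ξ)]
    have h1 : (-((δ⁻¹ : ℝ) : ℂ) - 2 * Real.pi * ξ * I) =
        -((δ : ℂ)⁻¹ * (1 + 2 * Real.pi * I * δ * ξ)) := by
      push_cast
      field_simp
      ring
    rw [h1]
    simp only [ofReal_zero, mul_zero, Complex.exp_zero, neg_div_neg_eq, one_div, mul_inv_rev, inv_inv]
    rw [mul_left_comm, inv_mul_cancel₀ hδ', mul_one]

/-- Each factor is the transform of a one-sided exponential; the case `δ < 0` is the reflection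
of the case `δ > 0`. -/
lemma exists_kernel {δ : ℝ} (hδ : δ ≠ 0) : ∃ k : ℝ → ℂ, Integrable k ∧
    (∃ C a : ℝ, 0 < C ∧ 0 < a ∧ ∀ x, ‖k x‖ ≤ C * Real.exp (-a * |x|)) ∧
    ∀ ξ : ℝ, 𝓕 k ξ = (1 + 2 * (Real.pi : ℂ) * Complex.I * (δ : ℂ) * (ξ : ℂ))⁻¹ := by
  rcases hδ.lt_or_gt with h | h
  · obtain ⟨k, hk, ⟨C, a, hC, ha, hb⟩, hF⟩ := exists_kernel_of_pos (neg_pos.2 h)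
    refine ⟨fun x ↦ k (-x), hk.comp_neg, ⟨C, a, hC, ha, fun x ↦ by simpa using hb (-x)⟩,
      fun ξ ↦ ?_⟩
    rw [← Real.fourierInv_eq_fourier_comp_neg, Real.fourierInv_eq_fourier_neg, hF]
    simp
  · exact exists_kernel_of_pos h

open scoped Convolution in
/-- With `c = min a b`, the triangle inequality gives
`a|t| + b|x - t| ≥ (c/2)|x| + (c/2)|t|`, so the decay rate at worst halves. -/
lemma norm_convolution_le {f k : ℝ → ℂ} {A B a b : ℝ} (hA : 0 < A) (hB : 0 < B)
    (ha : 0 < a) (hb : 0 < b) (hf : ∀ x, ‖f x‖ ≤ A * Real.exp (-a * |x|))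
    (hk : ∀ x, ‖k x‖ ≤ B * Real.exp (-b * |x|)) :
    ∃ C c : ℝ, 0 < C ∧ 0 < c ∧
      ∀ x, ‖(f ⋆[ContinuousLinearMap.mul ℂ ℂ] k) x‖ ≤ C * Real.exp (-c * |x|) := by
  obtain ⟨c, hc, hca, hcb⟩ : ∃ c : ℝ, 0 < c ∧ 2 * c ≤ a ∧ 2 * c ≤ b :=
    ⟨min a b / 2, by positivity, by linarith [min_le_left a b], by linarith [min_le_right a b]⟩
  have hint := integrable_exp_neg_mul_abs hc
  have hI : 0 ≤ ∫ t : ℝ, Real.exp (-c * |t|) := integral_nonneg fun _ ↦ (Real.exp_pos _).le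
  refine ⟨A * B * (1 + ∫ t : ℝ, Real.exp (-c * |t|)), c, by positivity, hc, fun x ↦ ?_⟩
  have key : ‖(f ⋆[ContinuousLinearMap.mul ℂ ℂ] k) x‖ ≤
      ∫ t : ℝ, A * B * Real.exp (-c * |x|) * Real.exp (-c * |t|) := by
    refine norm_integral_le_of_norm_le (hint.const_mul _) (.of_forall fun t ↦ ?_)
    rw [ContinuousLinearMap.mul_apply', norm_mul]
    refine (mul_le_mul (hf t) (hk (x - t)) (norm_nonneg _) (by positivity)).trans ?_
    rw [show A * Real.exp (-a * |t|) * (B * Real.exp (-b * |x - t|)) =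
      A * B * Real.exp (-a * |t| + -b * |x - t|) by rw [Real.exp_add]; ring,
      show A * B * Real.exp (-c * |x|) * Real.exp (-c * |t|) =
      A * B * Real.exp (-c * |x| + -c * |t|) by rw [Real.exp_add]; ring]
    refine mul_le_mul_of_nonneg_left (Real.exp_le_exp.2 ?_) (by positivity)
    have h1 : |x| ≤ |t| + |x - t| := by simpa using abs_add_le t (x - t)
    nlinarith [abs_nonneg t, abs_nonneg (x - t), mul_le_mul_of_nonneg_right hca (abs_nonneg t),
      mul_le_mul_of_nonneg_right hcb (abs_nonneg (x - t)), mul_le_mul_of_nonneg_left h1 hc.le]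
  refine key.trans ?_
  rw [integral_const_mul]
  nlinarith [show 0 < A * B * Real.exp (-c * |x|) by positivity]

lemma exists_decaying_of_product (m : ℕ) (hm : 1 ≤ m) : ∀ (δ : Fin m → ℝ), (∀ i, δ i ≠ 0) →
    ∃ h : ℝ → ℂ, Integrable h ∧
    (∃ C a : ℝ, 0 < C ∧ 0 < a ∧ ∀ x, ‖h x‖ ≤ C * Real.exp (-a * |x|)) ∧
    ∀ ξ : ℝ, 𝓕 h ξ =
      ∏ k : Fin m, (1 + 2 * (Real.pi : ℂ) * Complex.I * (δ k : ℂ) * (ξ : ℂ))⁻¹ := by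
  induction m, hm using Nat.le_induction with
  | base =>
    intro δ hδ
    simpa using exists_kernel (hδ 0)
  | succ m hm ih =>
    intro δ hδ
    obtain ⟨k, hk, ⟨A, a, hA, ha, hkb⟩, hkF⟩ := exists_kernel (hδ 0)
    obtain ⟨h, hh, ⟨B, b, hB, hb, hhb⟩, hhF⟩ := ih (fun i ↦ δ i.succ) fun i ↦ hδ _
    refine ⟨convolution k h (ContinuousLinearMap.mul ℂ ℂ) volume,
      hk.integrable_convolution _ hh, norm_convolution_le hA hB ha hb hkb hhb, fun ξ ↦ ?_⟩
    rw [Real.fourier_mul_convolution_eq hk hh, hkF, hhF, Fin.prod_univ_succ]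

lemma norm_factor_inv_sq (δ ξ : ℝ) :
    ‖(1 + 2 * (Real.pi : ℂ) * Complex.I * (δ : ℂ) * (ξ : ℂ))⁻¹‖ ^ 2 =
      (1 + (2 * Real.pi * δ * ξ) ^ 2)⁻¹ := by
  rw [norm_inv, inv_pow, Complex.sq_norm, Complex.normSq_apply]
  simp
  ring

lemma norm_factor_inv_le_one (δ ξ : ℝ) :
    ‖(1 + 2 * (Real.pi : ℂ) * Complex.I * (δ : ℂ) * (ξ : ℂ))⁻¹‖ ≤ 1 := by
  rw [← sq_le_one_iff₀ (norm_nonneg _), norm_factor_inv_sq]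
  exact inv_le_one_of_one_le₀ (by nlinarith [sq_nonneg (2 * Real.pi * δ * ξ)])

/-- Two of the factors suffice for integrability: by AM-GM their product is at most half the sum
of their squares, and the remaining factors are bounded by `1`. -/
lemma integrable_product {m : ℕ} (hm : 2 ≤ m) (δ : Fin m → ℝ) (hδ : ∀ i, δ i ≠ 0) :
    Integrable fun ξ : ℝ ↦
      ∏ k : Fin m, (1 + 2 * (Real.pi : ℂ) * Complex.I * (δ k : ℂ) * (ξ : ℂ))⁻¹ := by
  obtain ⟨n, rfl⟩ : ∃ n, m = n + 2 := ⟨m - 2, by omega⟩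
  have hsq : ∀ i, Integrable fun ξ : ℝ ↦ (1 + (2 * Real.pi * δ i * ξ) ^ 2)⁻¹ := fun i ↦
    integrable_inv_one_add_sq.comp_mul_left'
      (mul_ne_zero (mul_ne_zero two_ne_zero Real.pi_ne_zero) (hδ i))
  refine Integrable.mono' ((hsq 0).add (hsq 1)) ?_ (.of_forall fun ξ ↦ ?_)
  · exact (by fun_prop : Measurable _).aestronglyMeasurable
  · rw [Fin.prod_univ_succ, Fin.prod_univ_succ, norm_mul, norm_mul, norm_prod]
    have hp : ∏ i : Fin n, ‖(1 + 2 * (Real.pi : ℂ) * Complex.I * (δ i.succ.succ : ℂ) *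
        (ξ : ℂ))⁻¹‖ ≤ 1 :=
      Finset.prod_le_one (fun _ _ ↦ norm_nonneg _) fun _ _ ↦ norm_factor_inv_le_one _ _
    have h0 := norm_factor_inv_sq (δ 0) ξ
    have h1 := norm_factor_inv_sq (δ 1) ξ
    simp only [Fin.succ_zero_eq_one, Pi.add_apply]
    rw [← h0, ← h1]
    set u := ‖(1 + 2 * (Real.pi : ℂ) * Complex.I * (δ 0 : ℂ) * (ξ : ℂ))⁻¹‖
    set v := ‖(1 + 2 * (Real.pi : ℂ) * Complex.I * (δ 1 : ℂ) * (ξ : ℂ))⁻¹‖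
    have hu : 0 ≤ u := norm_nonneg _
    have hv : 0 ≤ v := norm_nonneg _
    have := mul_le_mul_of_nonneg_left hp (mul_nonneg hu hv)
    nlinarith [sq_nonneg (u - v), sq_nonneg u, sq_nonneg v]

theorem stmt18 (m : ℕ) (hm : 1 ≤ m) (δ : Fin m → ℝ) (hδ0 : ∀ i, δ i ≠ 0)
    (g : ℝ → ℂ) (hg : Integrable g)
    (hFT : ∀ ξ : ℝ, 𝓕 g ξ =
      ∏ k : Fin m, (1 + 2 * (Real.pi : ℂ) * Complex.I * (δ k : ℂ) * (ξ : ℂ))⁻¹) :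
    (∃ C a : ℝ, 0 < C ∧ 0 < a ∧ ∀ᵐ x : ℝ, ‖g x‖ ≤ C * Real.exp (-a * |x|)) ∧
    (2 ≤ m → ∃ g₀ : ℝ → ℂ, Continuous g₀ ∧ ∀ᵐ x : ℝ, g x = g₀ x) := by
  constructor
  · obtain ⟨h, hh, ⟨C, a, hC, ha, hb⟩, hF⟩ := exists_decaying_of_product m hm δ hδ0
    refine ⟨C, a, hC, ha, ?_⟩
    filter_upwards [ae_eq_of_fourier_eq hg hh fun ξ ↦ (hFT ξ).trans (hF ξ).symm] with x hx
    rw [hx]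
    exact hb x
  · intro hm2
    have hint : Integrable (𝓕 g) := by
      rw [funext hFT]
      exact integrable_product hm2 δ hδ0
    exact ⟨𝓕⁻ (𝓕 g), continuous_fourierInv_of_integrable hint, ae_eq_fourierInv_fourier hg hint⟩
end
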